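/- arXiv:2110.06418 — 2 statements merged into one kernel-verified Lean document; each statement's English description precedes it below -/
import Mathlib

section
/- Let A ∈ ℝ^{d×d} be a stable matrix (spectral radius < 1), let Q ⪰ I, and let P be the unique solution of the discrete-time Lyapunov equation P = Q + Aᵀ P A. Then for all integers j ≥ 0: (Aᵀ)^j A^j ⪯ (Aᵀ)^j P A^j ⪯ (1 − 1/‖P‖_op)^j · P, where ⪯ denotes the Loewner (positive semidefinite) order. -/
open Matrix

/-- A real square matrix is stable if every complex eigenvalue has modulus `< 1`. -/
def IsStable {n : ℕ} (M : Matrix (Fin n) (Fin n) ℝ) : Prop :=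
  ∀ μ ∈ spectrum ℂ (M.map Complex.ofReal), ‖μ‖ < 1

/-- Euclidean operator norm of a real matrix. -/
noncomputable def opNorm {p q : ℕ} (M : Matrix (Fin p) (Fin q) ℝ) : ℝ :=
  ‖LinearMap.toContinuousLinearMap (Matrix.toEuclideanLin M)‖


open Filter Topology

lemma aux_banach {B : Type*} [NormedRing B] [NormedAlgebra ℂ B] [CompleteSpace B] [Nontrivial B]
    (a : B) (h : ∀ z ∈ spectrum ℂ a, ‖z‖ < 1) : Tendsto (fun n : ℕ => a ^ n) atTop (𝓝 0) := by
  have h1 : spectralRadius ℂ a < ((1 : NNReal) : ENNReal) :=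
    spectrum.spectralRadius_lt_of_forall_lt a (fun z hz => by
      have := h z hz
      exact_mod_cast this)
  obtain ⟨r, hr1, hr2⟩ := ENNReal.lt_iff_exists_nnreal_btwn.1 h1
  have hr2' : r < 1 := by exact_mod_cast hr2
  have h2 := (spectrum.pow_nnnorm_pow_one_div_tendsto_nhds_spectralRadius a).eventually_lt_const hr1
  rw [tendsto_zero_iff_norm_tendsto_zero]
  refine squeeze_zero' (Eventually.of_forall fun n => norm_nonneg _) (g := fun n : ℕ => (r : ℝ) ^ n) ?_
    (tendsto_pow_atTop_nhds_zero_of_lt_one r.2 (by exact_mod_cast hr2'))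
  filter_upwards [h2, eventually_gt_atTop 0] with n hn hn0
  have hn1 : (0 : ℝ) < n := by exact_mod_cast hn0
  have h3 : (‖a ^ n‖₊ : ENNReal) ≤ (r : ENNReal) ^ n := by
    have := ENNReal.rpow_le_rpow hn.le hn1.le
    rw [← ENNReal.rpow_mul, one_div, inv_mul_cancel₀ hn1.ne', ENNReal.rpow_one,
      ENNReal.rpow_natCast] at this
    exact this
  have h4 : ‖a ^ n‖₊ ≤ r ^ n := by exact_mod_cast h3
  exact_mod_cast h4

lemma aux_pow {d : ℕ} [NeZero d] (A : Matrix (Fin d) (Fin d) ℝ) (hA : IsStable A) :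
    Tendsto (fun n : ℕ => A ^ n) atTop (𝓝 0) := by
  have h : Tendsto (fun n : ℕ => (A.map Complex.ofReal) ^ n) atTop (𝓝 0) := by
    letI : NormedRing (Matrix (Fin d) (Fin d) ℂ) := Matrix.linftyOpNormedRing
    letI : NormedAlgebra ℂ (Matrix (Fin d) (Fin d) ℂ) := Matrix.linftyOpNormedAlgebra
    haveI : CompleteSpace (Matrix (Fin d) (Fin d) ℂ) := FiniteDimensional.complete ℂ _
    exact aux_banach (A.map Complex.ofReal) hA
  have h2 : ∀ n : ℕ, (A.map Complex.ofReal) ^ n = (A ^ n).map Complex.ofReal := fun n =>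
    (map_pow (Complex.ofRealHom.mapMatrix) A n).symm
  refine tendsto_pi_nhds.2 fun i => tendsto_pi_nhds.2 fun j => ?_
  have hij := (Complex.continuous_re.tendsto _).comp (tendsto_pi_nhds.1 (tendsto_pi_nhds.1 h i) j)
  simpa [Function.comp_def, h2] using hij

lemma aux_conj {d : ℕ} {M : Matrix (Fin d) (Fin d) ℝ} (hM : M.PosSemidef)
    (B : Matrix (Fin d) (Fin d) ℝ) (j : ℕ) : ((Bᵀ) ^ j * M * B ^ j).PosSemidef := by
  have := hM.conjTranspose_mul_mul_same (B ^ j)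
  rwa [conjTranspose_eq_transpose_of_trivial, transpose_pow] at this

lemma aux_lim {d : ℕ} [NeZero d] (A : Matrix (Fin d) (Fin d) ℝ) (hA : IsStable A)
    (M : Matrix (Fin d) (Fin d) ℝ) :
    Tendsto (fun n : ℕ => (Aᵀ) ^ n * M * A ^ n) atTop (𝓝 0) := by
  have h := aux_pow A hA
  have ht : Tendsto (fun n : ℕ => (A ^ n)ᵀ) atTop (𝓝 (0 : Matrix (Fin d) (Fin d) ℝ)ᵀ) :=
    ((continuous_id.matrix_transpose).tendsto (0 : Matrix (Fin d) (Fin d) ℝ)).comp h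
  have := (ht.mul (tendsto_const_nhds (x := M))).mul h
  simpa [transpose_pow] using this

lemma aux_psd {d : ℕ} [NeZero d] (A Q P : Matrix (Fin d) (Fin d) ℝ)
    (hA : IsStable A) (hQ : Q.PosSemidef) (hP : P = Q + Aᵀ * P * A) : P.PosSemidef := by
  have hQs : Qᵀ = Q := by simpa using hQ.1.eq
  have key : ∀ n : ℕ, ((P - (Aᵀ) ^ n * P * A ^ n)).PosSemidef := by
    intro n
    induction n with
    | zero => simpa using PosSemidef.zero
    | succ n ih =>
      have e : P - (Aᵀ) ^ (n+1) * P * A ^ (n+1)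
          = (P - (Aᵀ) ^ n * P * A ^ n) + (Aᵀ) ^ n * Q * A ^ n := by
        have : (Aᵀ) ^ n * P * A ^ n = (Aᵀ) ^ n * (Q + Aᵀ * P * A) * A ^ n := by rw [← hP]
        rw [this, pow_succ, pow_succ']
        noncomm_ring
      rw [e]
      exact ih.add (aux_conj hQ A n)
  have hl : Tendsto (fun n : ℕ => P - (Aᵀ) ^ n * P * A ^ n) atTop (𝓝 P) := by
    simpa using (tendsto_const_nhds (x := P)).sub (aux_lim A hA P)
  refine PosSemidef.of_dotProduct_mulVec_nonneg ?_ ?_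
  · have ht : Tendsto (fun n : ℕ => (P - (Aᵀ) ^ n * P * A ^ n)ᵀ) atTop (𝓝 Pᵀ) :=
      ((continuous_id.matrix_transpose).tendsto P).comp hl
    have e : (fun n : ℕ => (P - (Aᵀ) ^ n * P * A ^ n)ᵀ) = fun n : ℕ => P - (Aᵀ) ^ n * P * A ^ n := by
      ext1 n
      have := (key n).1.eq
      rwa [conjTranspose_eq_transpose_of_trivial] at this
    rw [e] at ht
    rw [IsHermitian, conjTranspose_eq_transpose_of_trivial]
    exact tendsto_nhds_unique ht hl
  · intro x
    have hc : Continuous fun M : Matrix (Fin d) (Fin d) ℝ => star x ⬝ᵥ (M *ᵥ x) := by fun_prop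
    exact ge_of_tendsto' ((hc.tendsto P).comp hl) (fun n => (key n).dotProduct_mulVec_nonneg x)

lemma aux_norm {d : ℕ} (P : Matrix (Fin d) (Fin d) ℝ) (x : Fin d → ℝ) :
    x ⬝ᵥ (P *ᵥ x) ≤ opNorm P * (x ⬝ᵥ x) := by
  set T := LinearMap.toContinuousLinearMap (Matrix.toEuclideanLin P) with hT
  let v : EuclideanSpace ℝ (Fin d) := WithLp.toLp 2 x
  have h1 : inner ℝ v (T v) = x ⬝ᵥ (P *ᵥ x) := by
    simp [hT, v, EuclideanSpace.inner_eq_star_dotProduct, Matrix.toEuclideanLin_apply,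
      dotProduct_comm]
  have h2 : ‖v‖ * ‖v‖ = x ⬝ᵥ x := by
    rw [← real_inner_self_eq_norm_mul_norm]
    rw [EuclideanSpace.inner_eq_star_dotProduct]
    simp [v]
  rw [← h1, ← h2]
  calc _ ≤ ‖v‖ * ‖T v‖ := real_inner_le_norm _ _
    _ ≤ ‖v‖ * (‖T‖ * ‖v‖) := by gcongr; exact T.le_opNorm v
    _ = opNorm P * (‖v‖ * ‖v‖) := by rw [opNorm]; ring

/-- Lyapunov decay: if `A` is stable, `Q ⪰ I` and `P = Q + AᵀPA`, then for all `j ≥ 0`,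
`(Aᵀ)ʲ Aʲ ⪯ (Aᵀ)ʲ P Aʲ ⪯ (1 - 1/‖P‖_op)ʲ P` in the Loewner order. -/
theorem lyapunov_decay {d : ℕ}
    (A Q P : Matrix (Fin d) (Fin d) ℝ)
    (hA : IsStable A) (hQ : (Q - 1).PosSemidef)
    (hP : P = Q + Aᵀ * P * A) :
    ∀ j : ℕ,
      ((Aᵀ) ^ j * P * A ^ j - (Aᵀ) ^ j * A ^ j).PosSemidef
      ∧ ((1 - 1 / opNorm P) ^ j • P - (Aᵀ) ^ j * P * A ^ j).PosSemidef := by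
  rcases Nat.eq_zero_or_pos d with rfl | hd
  · intro j
    exact ⟨by convert! PosSemidef.zero; exact Subsingleton.elim _ _,
      by convert! PosSemidef.zero; exact Subsingleton.elim _ _⟩
  haveI : NeZero d := ⟨hd.ne'⟩
  have hQ' : Q.PosSemidef := by simpa using hQ.add PosSemidef.one
  have hPp : P.PosSemidef := aux_psd A Q P hA hQ' hP
  have hP1 : (P - 1).PosSemidef := by
    have e : P - 1 = (Q - 1) + (Aᵀ) ^ 1 * P * A ^ 1 := by
      conv_lhs => rw [hP]
      simp only [pow_one]
      abel
    rw [e]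
    exact hQ.add (aux_conj hPp A 1)
  have hN : 1 ≤ opNorm P := by
    let x : Fin d → ℝ := Pi.single 0 1
    have h1 := hP1.dotProduct_mulVec_nonneg x
    have h2 := aux_norm P x
    have h3 : x ⬝ᵥ x = 1 := by simp [x]
    simp only [star_trivial, sub_mulVec, one_mulVec, dotProduct_sub] at h1
    rw [h3] at h1 h2
    linarith
  have hN0 : 0 < opNorm P := by linarith
  have hc : 0 ≤ 1 - 1 / opNorm P := by
    have : 1 / opNorm P ≤ 1 := by rw [div_le_one hN0]; exact hN
    linarith
  have h1P : (1 - (1 / opNorm P) • P).PosSemidef := by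
    refine PosSemidef.of_dotProduct_mulVec_nonneg ?_ ?_
    · have := hPp.1.eq
      rw [conjTranspose_eq_transpose_of_trivial] at this
      rw [IsHermitian, conjTranspose_eq_transpose_of_trivial, transpose_sub, transpose_smul, this,
        transpose_one]
    · intro x
      have h2 := aux_norm P x
      simp only [star_trivial, sub_mulVec, one_mulVec, dotProduct_sub, smul_mulVec,
        dotProduct_smul, smul_eq_mul]
      have : 1 / opNorm P * (x ⬝ᵥ P *ᵥ x) ≤ x ⬝ᵥ x := by
        rw [one_div, inv_mul_le_iff₀ hN0]; exact h2
      linarith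
  have step : ((1 - 1 / opNorm P) • P - Aᵀ * P * A).PosSemidef := by
    have e : (1 - 1 / opNorm P) • P - Aᵀ * P * A = (1 - (1 / opNorm P) • P) + (Q - 1) := by
      have : Aᵀ * P * A = P - Q := by
        rw [eq_sub_iff_add_eq, add_comm]; exact hP.symm
      rw [this, sub_smul, one_smul]
      abel
    rw [e]
    exact h1P.add hQ
  intro j
  refine ⟨?_, ?_⟩
  · have := aux_conj hP1 A j
    rwa [mul_sub, sub_mul, mul_one] at this
  · induction j with
    | zero => simpa using PosSemidef.zero
    | succ j ih =>
      generalize 1 - 1 / opNorm P = c at *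
      have e : c ^ (j+1) • P - (Aᵀ) ^ (j+1) * P * A ^ (j+1)
          = c • (c ^ j • P - (Aᵀ) ^ j * P * A ^ j)
            + (Aᵀ) ^ j * (c • P - Aᵀ * P * A) * A ^ j := by
        rw [smul_sub, smul_smul, mul_sub, sub_mul, ← pow_succ' c, mul_smul_comm, smul_mul_assoc,
          sub_add_sub_cancel, pow_succ (Aᵀ), pow_succ' A]
        simp only [mul_assoc]
      rw [e]
      exact (ih.smul hc).add (aux_conj step A j)
end

section
/- Let G(x,u) = A x + B u + f(x,u) with ‖f(x,u)‖ ≤ β(‖x‖² + ‖u‖²) whenever ‖x‖ + ‖u‖ ≤ r_nl. Let γ ∈ (0,1], Q ⪰ I, R ⪰ I, and let K be such that √γ·(A + BK) is stable, with Lyapunov solution P = P_{K,γ}. Let the damped nonlinear trajectory be x₀ given, x_{t+1} = √γ · G(x_t, K x_t), and set V₀ := x₀ᵀ P x₀. If V₀ ≤ r_nl² / (4 β² ‖P‖_op³), then for all t ≥ 0: ‖x_t‖² ≤ x_tᵀ P x_t ≤ V₀ · (1 − 1/(2‖P‖_op))^t. -/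
open Matrix

/-- Euclidean norm of a vector in `ℝ^n`. -/
noncomputable def evnorm {n : ℕ} (x : Fin n → ℝ) : ℝ :=
  ‖(WithLp.equiv 2 (Fin n → ℝ)).symm x‖

/-- `P_{K,γ} = Σ_t γ^t ((A+BK)^t)ᵀ (Q + KᵀRK) (A+BK)^t`, the solution of the discounted
Lyapunov equation when `√γ (A+BK)` is stable. -/
noncomputable def lyapP {d m : ℕ} (A : Matrix (Fin d) (Fin d) ℝ) (B : Matrix (Fin d) (Fin m) ℝ)
    (Q : Matrix (Fin d) (Fin d) ℝ) (R : Matrix (Fin m) (Fin m) ℝ)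
    (K : Matrix (Fin m) (Fin d) ℝ) (γ : ℝ) : Matrix (Fin d) (Fin d) ℝ :=
  ∑' t : ℕ, γ ^ t • (((A + B * K) ^ t)ᵀ * (Q + Kᵀ * R * K) * (A + B * K) ^ t)


section frob
attribute [local instance] Matrix.frobeniusNormedRing Matrix.frobeniusNormedAlgebra

lemma aux_geom {d : ℕ} [NeZero d] (M : Matrix (Fin d) (Fin d) ℝ) (h : IsStable M) :
    ∃ r : ℝ, 0 ≤ r ∧ r < 1 ∧ ∀ᶠ t : ℕ in Filter.atTop, ‖M ^ t‖ ≤ r ^ t := by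
  set N := M.map Complex.ofReal with hN
  have hpow : ∀ t : ℕ, ‖N ^ t‖ = ‖M ^ t‖ := by
    intro t
    have : N ^ t = (M ^ t).map Complex.ofReal := by
      have := (map_pow (Complex.ofRealHom.mapMatrix (m := Fin d)) M t)
      exact this.symm
    rw [this]
    exact Matrix.frobenius_norm_map_eq _ _ (fun a => by simp)
  have hlt : spectralRadius ℂ N < ((1 : NNReal) : ENNReal) := by
    apply spectrum.spectralRadius_lt_of_forall_lt
    intro k hk
    have := h k hk
    exact this
  obtain ⟨r, hr1, hr2⟩ := ENNReal.lt_iff_exists_nnreal_btwn.1 hlt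
  refine ⟨r, r.2, by exact_mod_cast hr2, ?_⟩
  have hg := spectrum.pow_nnnorm_pow_one_div_tendsto_nhds_spectralRadius N
  filter_upwards [hg.eventually_lt_const hr1, Filter.eventually_gt_atTop 0] with t ht ht0
  rw [← hpow]
  have h1 : ((‖N ^ t‖₊ : ENNReal)) ≤ (r : ENNReal) ^ t := by
    have h2 : ((‖N ^ t‖₊ : ENNReal) ^ (1 / (t:ℝ))) ^ t ≤ (r : ENNReal) ^ t := by
      gcongr
    rwa [← ENNReal.rpow_natCast, ← ENNReal.rpow_mul, one_div, inv_mul_cancel₀ (by positivity), ENNReal.rpow_one] at h2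
  have h3 : ‖N ^ t‖₊ ≤ r ^ t := by exact_mod_cast h1
  exact_mod_cast h3

lemma aux_summable {d : ℕ} (M S : Matrix (Fin d) (Fin d) ℝ) (h : IsStable M) :
    Summable (fun t : ℕ => (M ^ t)ᵀ * S * M ^ t) := by
  rcases Nat.eq_zero_or_pos d with rfl | hd
  · convert summable_zero with t
    exact Subsingleton.elim _ _
  have : NeZero d := ⟨hd.ne'⟩
  obtain ⟨r, hr0, hr1, hr⟩ := aux_geom M h
  have hs : Summable (fun t : ℕ => ‖S‖ * (r ^ 2) ^ t) :=
    (summable_geometric_of_lt_one (by positivity) (by nlinarith)).mul_left _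
  refine Summable.of_norm_bounded_eventually_nat hs ?_
  filter_upwards [hr] with t ht
  calc ‖(M ^ t)ᵀ * S * M ^ t‖ ≤ ‖(M ^ t)ᵀ‖ * ‖S‖ * ‖M ^ t‖ :=
        (norm_mul_le _ _).trans (by gcongr; exact norm_mul_le _ _)
    _ = ‖S‖ * (‖M ^ t‖ * ‖M ^ t‖) := by rw [Matrix.frobenius_norm_transpose]; ring
    _ ≤ ‖S‖ * (r ^ t * r ^ t) := by gcongr
    _ = _ := by rw [← pow_mul, mul_comm 2 t, pow_mul]; ring

end frob

lemma aux_lyap {d : ℕ} (M S : Matrix (Fin d) (Fin d) ℝ) (h : IsStable M) (hS : S.PosSemidef) :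
    (∑' t : ℕ, (M ^ t)ᵀ * S * M ^ t).PosSemidef ∧
    (∑' t : ℕ, (M ^ t)ᵀ * S * M ^ t) = S + Mᵀ * (∑' t : ℕ, (M ^ t)ᵀ * S * M ^ t) * M := by
  have hs := aux_summable M S h
  constructor
  · have hterm : ∀ t : ℕ, ((M ^ t)ᵀ * S * M ^ t).PosSemidef := fun t => by
      simpa using hS.conjTranspose_mul_mul_same (M ^ t)
    refine Matrix.PosSemidef.of_dotProduct_mulVec_nonneg ?_ ?_
    · have : (∑' t : ℕ, (M ^ t)ᵀ * S * M ^ t)ᴴ = ∑' t : ℕ, ((M ^ t)ᵀ * S * M ^ t)ᴴ := Matrix.conjTranspose_tsum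
      rw [Matrix.IsHermitian, this]
      exact tsum_congr fun t => (hterm t).isHermitian
    · intro v
      have hc : Continuous (fun X : Matrix (Fin d) (Fin d) ℝ => star v ⬝ᵥ X.mulVec v) := by fun_prop
      let L : Matrix (Fin d) (Fin d) ℝ →+ ℝ :=
        { toFun := fun X => star v ⬝ᵥ X.mulVec v
          map_zero' := by simp
          map_add' := fun a b => by simp [Matrix.add_mulVec, dotProduct_add] }
      have := hs.hasSum.map L hc
      exact this.nonneg (fun t => (hterm t).dotProduct_mulVec_nonneg v)
  · conv_lhs => rw [hs.tsum_eq_zero_add]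
    rw [← hs.tsum_mul_left, ← (hs.mul_left _).tsum_mul_right]
    simp only [pow_zero, Matrix.transpose_one, one_mul, mul_one]
    congr 1
    refine tsum_congr fun t => ?_
    rw [pow_succ, Matrix.transpose_mul]
    simp only [Matrix.mul_assoc]

lemma aux_lyapP_eq {d m : ℕ} (A : Matrix (Fin d) (Fin d) ℝ) (B : Matrix (Fin d) (Fin m) ℝ)
    (Q : Matrix (Fin d) (Fin d) ℝ) (R : Matrix (Fin m) (Fin m) ℝ)
    (K : Matrix (Fin m) (Fin d) ℝ) (γ : ℝ) (hγ : 0 < γ) :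
    lyapP A B Q R K γ = ∑' t : ℕ, ((Real.sqrt γ • (A + B * K)) ^ t)ᵀ * (Q + Kᵀ * R * K) *
      (Real.sqrt γ • (A + B * K)) ^ t := by
  unfold lyapP
  refine tsum_congr fun t => ?_
  rw [smul_pow, Matrix.transpose_smul, Matrix.smul_mul, Matrix.smul_mul, Matrix.mul_smul, smul_smul,
    ← mul_pow, Real.mul_self_sqrt hγ.le]

lemma aux_evnorm_sq {n : ℕ} (v : Fin n → ℝ) : evnorm v ^ 2 = v ⬝ᵥ v := by
  unfold evnorm
  rw [EuclideanSpace.norm_sq_eq]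
  simp [dotProduct, sq]

lemma aux_evnorm_nonneg {n : ℕ} (v : Fin n → ℝ) : 0 ≤ evnorm v := norm_nonneg _

lemma aux_evnorm_smul {n : ℕ} (c : ℝ) (v : Fin n → ℝ) : evnorm (c • v) = |c| * evnorm v := by
  unfold evnorm
  exact norm_smul c (WithLp.toLp 2 v)

lemma aux_quad_le {n : ℕ} (P : Matrix (Fin n) (Fin n) ℝ) (v : Fin n → ℝ) :
    v ⬝ᵥ P.mulVec v ≤ opNorm P * evnorm v ^ 2 := by
  have h1 := (LinearMap.toContinuousLinearMap (Matrix.toEuclideanLin P)).le_opNorm (WithLp.toLp 2 v)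
  have h2 := real_inner_le_norm (WithLp.toLp 2 v) (LinearMap.toContinuousLinearMap (Matrix.toEuclideanLin P) (WithLp.toLp 2 v))
  have h3 : inner ℝ (WithLp.toLp 2 v) (LinearMap.toContinuousLinearMap (Matrix.toEuclideanLin P) (WithLp.toLp 2 v)) = v ⬝ᵥ P.mulVec v := by
    simp [PiLp.inner_apply, dotProduct, mul_comm, Matrix.toLpLin_apply]
  rw [h3] at h2
  have h4 : evnorm v = ‖WithLp.toLp 2 v‖ := rfl
  rw [h4, opNorm]
  nlinarith [norm_nonneg (WithLp.toLp 2 v)]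

lemma aux_cs {n : ℕ} (P : Matrix (Fin n) (Fin n) ℝ) (hP : P.PosSemidef) (v e : Fin n → ℝ) :
    (v + e) ⬝ᵥ P.mulVec (v + e) ≤
      (Real.sqrt (v ⬝ᵥ P.mulVec v) + Real.sqrt (e ⬝ᵥ P.mulVec e)) ^ 2 := by
  have hnn : ∀ w : Fin n → ℝ, 0 ≤ w ⬝ᵥ P.mulVec w := fun w => by
    simpa using hP.dotProduct_mulVec_nonneg w
  have hsym : e ⬝ᵥ P.mulVec v = v ⬝ᵥ P.mulVec e := by
    have hT : Pᵀ = P := by simpa using hP.isHermitian.eq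
    rw [Matrix.dotProduct_mulVec, ← Matrix.mulVec_transpose, hT, dotProduct_comm]
  have hexp : ∀ t : ℝ, (v + t • e) ⬝ᵥ P.mulVec (v + t • e) =
      v ⬝ᵥ P.mulVec v + 2 * t * (v ⬝ᵥ P.mulVec e) + t ^ 2 * (e ⬝ᵥ P.mulVec e) := by
    intro t
    simp only [Matrix.mulVec_add, Matrix.mulVec_smul, add_dotProduct, dotProduct_add,
      smul_dotProduct, dotProduct_smul, smul_eq_mul, hsym]
    ring
  have hd := discrim_le_zero (a := e ⬝ᵥ P.mulVec e) (b := 2 * (v ⬝ᵥ P.mulVec e))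
    (c := v ⬝ᵥ P.mulVec v) (fun t => by have := hnn (v + t • e); rw [hexp] at this; nlinarith)
  have h1 := hexp 1
  rw [one_smul] at h1
  rw [h1]
  set a := v ⬝ᵥ P.mulVec v
  set c := e ⬝ᵥ P.mulVec e
  set b := v ⬝ᵥ P.mulVec e
  have ha : 0 ≤ a := hnn v
  have hc : 0 ≤ c := hnn e
  have hb : b ≤ Real.sqrt a * Real.sqrt c := by
    rw [← Real.sqrt_mul ha]
    apply Real.le_sqrt_of_sq_le
    unfold discrim at hd
    nlinarith
  nlinarith [Real.sq_sqrt ha, Real.sq_sqrt hc]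

lemma le_of_sq_le_sq_aux {a b : ℝ} (h : a ^ 2 ≤ b ^ 2) (hb : 0 ≤ b) : a ≤ b := by
  nlinarith

lemma aux_poly (c z : ℝ) (hc0 : 0 < c) (hc1 : c ≤ 1) (hz : z ^ 2 = 1 - c) :
    (z + c ^ 2 / 2) ^ 2 ≤ 1 - c / 2 := by
  have hzl : z ≤ (1 - c) * (11/10) + 5/22 := by linarith [sq_nonneg (z - 5/11)]
  have h1 : c * ((1 - c) * (11/10) + 5/22) + c ^ 3 / 4 ≤ 1 / 2 := by
    nlinarith [mul_nonneg hc0.le (sq_nonneg (c - 4/5)), sq_nonneg (c - 4/5)]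
  have h7 : c * z + c ^ 3 / 4 ≤ 1 / 2 := by linarith [mul_le_mul_of_nonneg_left hzl hc0.le]
  linarith [mul_le_mul_of_nonneg_left h7 hc0.le]

lemma aux_scalar (V q p β : ℝ) (hp : 1 ≤ p) (hβ : 0 ≤ β) (hq0 : 0 ≤ q) (hqV : q ≤ V) (hVq : V ≤ p * q)
    (hV : 4 * β ^ 2 * p ^ 3 * V ≤ 1) :
    (Real.sqrt (V - q) + Real.sqrt p * β * q) ^ 2 ≤ V * (1 - 1 / (2 * p)) := by
  have hp0 : 0 < p := by linarith
  have hV0 : 0 ≤ V := by linarith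
  rcases hV0.eq_or_lt with h0 | hVpos
  · have : q = 0 := by nlinarith
    subst this; subst h0; simp
  set c := 1 / p with hc
  have hc0 : 0 < c := by positivity
  have hc1 : c ≤ 1 := by rw [hc, div_le_one hp0]; exact hp
  have hpc : p * c = 1 := by rw [hc]; field_simp
  have hcp : 1 / (2 * p) = c / 2 := by rw [hc]; field_simp
  rw [hcp]
  set w := Real.sqrt V
  have hw : w ^ 2 = V := Real.sq_sqrt hV0
  have hw0 : 0 < w := Real.sqrt_pos.2 hVpos
  set y := Real.sqrt (1 - q / V)
  have hs1 : q / V ≤ 1 := by rw [div_le_one hVpos]; exact hqV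
  have hsc : c ≤ q / V := by rw [hc, div_le_div_iff₀ hp0 hVpos]; linarith
  have hy : y ^ 2 = 1 - q / V := Real.sq_sqrt (by linarith)
  have hy0 : 0 ≤ y := Real.sqrt_nonneg _
  set z := Real.sqrt (1 - c)
  have hz : z ^ 2 = 1 - c := Real.sq_sqrt (by linarith)
  have hz0 : 0 ≤ z := Real.sqrt_nonneg _
  have hyz : y ≤ z := Real.sqrt_le_sqrt (by linarith)
  have hz1 : z ≤ 1 := by nlinarith
  have hq : q = V * (1 - y ^ 2) := by rw [hy]; field_simp; ring
  have h1 : Real.sqrt (V - q) = w * y := by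
    rw [← Real.sqrt_mul hV0]; congr 1; field_simp
  have h2 : Real.sqrt p * β * w ≤ c / 2 := by
    apply le_of_sq_le_sq_aux _ (by positivity)
    rw [mul_pow, mul_pow, Real.sq_sqrt hp0.le, hw]
    have : p * β ^ 2 * V = (4 * β ^ 2 * p ^ 3 * V) * (c ^ 2 / 4) := by
      have : p * β ^ 2 * V = p * β ^ 2 * V * (p * c) ^ 2 := by rw [hpc]; ring
      rw [this]; ring
    rw [this]
    nlinarith [sq_nonneg c]
  have hy1 : 0 ≤ 1 - y ^ 2 := by nlinarith
  have h3 : Real.sqrt (V - q) + Real.sqrt p * β * q ≤ w * (z + c ^ 2 / 2) := by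
    have e : Real.sqrt (V - q) + Real.sqrt p * β * q =
        w * (y + (Real.sqrt p * β * w) * (1 - y ^ 2)) := by
      rw [h1]
      have hq' : q = w ^ 2 * (1 - y ^ 2) := by rw [hw]; exact hq
      linear_combination (Real.sqrt p * β) * hq'
    rw [e]
    apply mul_le_mul_of_nonneg_left _ hw0.le
    have : (Real.sqrt p * β * w) * (1 - y ^ 2) ≤ c / 2 * (1 - y ^ 2) :=
      mul_le_mul_of_nonneg_right h2 hy1
    have h5 : 0 ≤ (z - y) * (1 - c * (z + y) / 2) := by
      apply mul_nonneg (by linarith)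
      nlinarith
    have h6 : c / 2 * z ^ 2 = c / 2 * (1 - c) := by rw [hz]
    nlinarith
  calc _ ≤ (w * (z + c ^ 2 / 2)) ^ 2 := by gcongr
    _ = V * (z + c ^ 2 / 2) ^ 2 := by rw [mul_pow, hw]
    _ ≤ _ := by
      apply mul_le_mul_of_nonneg_left _ hV0
      exact aux_poly c z hc0 hc1 hz

lemma aux_le_sq {d : ℕ} (Q : Matrix (Fin d) (Fin d) ℝ) (hQ : (Q - 1).PosSemidef)
    (v : Fin d → ℝ) : evnorm v ^ 2 ≤ v ⬝ᵥ Q.mulVec v := by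
  have := hQ.dotProduct_mulVec_nonneg v
  simp [Matrix.sub_mulVec, dotProduct_sub] at this
  rw [aux_evnorm_sq]; exact this

/-- Exponential decay of damped nonlinear trajectories: under the quadratic remainder
bound, with `Q, R ⪰ I`, `√γ(A+BK)` stable, `P = P_{K,γ}`, and
`V₀ = x₀ᵀPx₀ ≤ r_nl²/(4β²‖P‖³)`, the trajectory `x_{t+1} = √γ G(x_t, Kx_t)` satisfies
`‖x_t‖² ≤ x_tᵀPx_t ≤ V₀ (1 - 1/(2‖P‖))ᵗ` for all `t`. -/
theorem nonlinear_exp_decay {d m : ℕ}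
    (G : (Fin d → ℝ) → (Fin m → ℝ) → (Fin d → ℝ))
    (A : Matrix (Fin d) (Fin d) ℝ) (B : Matrix (Fin d) (Fin m) ℝ)
    (Q : Matrix (Fin d) (Fin d) ℝ) (R : Matrix (Fin m) (Fin m) ℝ)
    (K : Matrix (Fin m) (Fin d) ℝ)
    (β rnl : ℝ) (hβ : 1 ≤ β) (hrnl0 : 0 < rnl) (hrnl1 : rnl ≤ 1)
    (hf : ∀ (x : Fin d → ℝ) (u : Fin m → ℝ), evnorm x + evnorm u ≤ rnl →
      evnorm (G x u - (A.mulVec x + B.mulVec u)) ≤ β * (evnorm x ^ 2 + evnorm u ^ 2))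
    (γ : ℝ) (hγ : γ ∈ Set.Ioc (0 : ℝ) 1)
    (hQ : (Q - 1).PosSemidef) (hR : (R - 1).PosSemidef)
    (hstab : IsStable (Real.sqrt γ • (A + B * K)))
    (x : ℕ → Fin d → ℝ)
    (hstep : ∀ t : ℕ, x (t + 1) = Real.sqrt γ • G (x t) (K.mulVec (x t)))
    (hV0 : x 0 ⬝ᵥ (lyapP A B Q R K γ).mulVec (x 0)
        ≤ rnl ^ 2 / (4 * β ^ 2 * opNorm (lyapP A B Q R K γ) ^ 3)) :
    ∀ t : ℕ,
      evnorm (x t) ^ 2 ≤ x t ⬝ᵥ (lyapP A B Q R K γ).mulVec (x t)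
      ∧ x t ⬝ᵥ (lyapP A B Q R K γ).mulVec (x t)
          ≤ (x 0 ⬝ᵥ (lyapP A B Q R K γ).mulVec (x 0))
              * (1 - 1 / (2 * opNorm (lyapP A B Q R K γ))) ^ t := by
  have hγ0 := hγ.1
  set M := Real.sqrt γ • (A + B * K) with hM
  set S := Q + Kᵀ * R * K with hS
  have hQp : Q.PosSemidef := by simpa using hQ.add Matrix.PosSemidef.one
  have hRp : R.PosSemidef := by simpa using hR.add Matrix.PosSemidef.one
  have hSp : S.PosSemidef := hQp.add (by simpa using hRp.conjTranspose_mul_mul_same K)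
  obtain ⟨hPp, hPe⟩ := aux_lyap M S hstab hSp
  rw [← aux_lyapP_eq A B Q R K γ hγ0] at hPp hPe
  set P := lyapP A B Q R K γ
  have hnn : ∀ w : Fin d → ℝ, 0 ≤ w ⬝ᵥ P.mulVec w := fun w => by
    simpa using hPp.dotProduct_mulVec_nonneg w
  have hSq : ∀ v : Fin d → ℝ, evnorm v ^ 2 + evnorm (K.mulVec v) ^ 2 ≤ v ⬝ᵥ S.mulVec v := by
    intro v
    have h1 := aux_le_sq Q hQ v
    have h2 := aux_le_sq R hR (K.mulVec v)
    have h3 : v ⬝ᵥ S.mulVec v = v ⬝ᵥ Q.mulVec v + K.mulVec v ⬝ᵥ R.mulVec (K.mulVec v) := by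
      rw [hS, Matrix.add_mulVec, dotProduct_add, ← Matrix.mulVec_mulVec, ← Matrix.mulVec_mulVec,
        Matrix.dotProduct_mulVec v Kᵀ, Matrix.vecMul_transpose]
    linarith
  have hly : ∀ v : Fin d → ℝ, M.mulVec v ⬝ᵥ P.mulVec (M.mulVec v) =
      v ⬝ᵥ P.mulVec v - v ⬝ᵥ S.mulVec v := by
    intro v
    have : v ⬝ᵥ P.mulVec v = v ⬝ᵥ (S + Mᵀ * P * M).mulVec v := by rw [← hPe]
    rw [this, Matrix.add_mulVec, dotProduct_add, ← Matrix.mulVec_mulVec, ← Matrix.mulVec_mulVec,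
        Matrix.dotProduct_mulVec v Mᵀ, Matrix.vecMul_transpose]
    ring
  have hqV : ∀ v : Fin d → ℝ, v ⬝ᵥ S.mulVec v ≤ v ⬝ᵥ P.mulVec v := by
    intro v
    have := hnn (M.mulVec v)
    rw [hly] at this
    linarith
  have hlow : ∀ v : Fin d → ℝ, evnorm v ^ 2 ≤ v ⬝ᵥ P.mulVec v := by
    intro v
    nlinarith [hSq v, hqV v, sq_nonneg (evnorm (K.mulVec v))]
  intro t
  refine ⟨hlow _, ?_⟩
  rcases Nat.eq_zero_or_pos d with hd | hd
  · subst hd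
    simp [dotProduct]
  set p := opNorm P
  have hp : 1 ≤ p := by
    have h1 := hlow (fun _ => 1)
    have h2 := aux_quad_le P (fun _ => 1)
    have h3 : 0 < evnorm (fun _ : Fin d => (1:ℝ)) ^ 2 := by
      rw [aux_evnorm_sq]; simp [dotProduct]; exact hd
    exact le_of_mul_le_mul_right (by linarith) h3
  have hp0 : 0 < p := by linarith
  have hβ0 : 0 < β := by linarith
  have hρ0 : 0 ≤ 1 - 1 / (2 * p) := by
    rw [sub_nonneg, div_le_one (by positivity)]; linarith
  have hρ1 : 1 - 1 / (2 * p) ≤ 1 := by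
    have : 0 ≤ 1 / (2 * p) := by positivity
    linarith
  -- one step
  have step : ∀ s : ℕ, x s ⬝ᵥ P.mulVec (x s) ≤ rnl ^ 2 / (4 * β ^ 2 * p ^ 3) →
      x (s + 1) ⬝ᵥ P.mulVec (x (s + 1)) ≤ x s ⬝ᵥ P.mulVec (x s) * (1 - 1 / (2 * p)) := by
    intro s hs
    rw [le_div_iff₀ (by positivity)] at hs
    set v := x s
    set V := v ⬝ᵥ P.mulVec v
    set q := v ⬝ᵥ S.mulVec v
    have hV0 : 0 ≤ V := hnn v
    have hSv : evnorm v ^ 2 + evnorm (K.mulVec v) ^ 2 ≤ q := hSq v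
    have hqv : q ≤ V := hqV v
    have hβp : 1 ≤ β ^ 2 * p ^ 3 := by
      have h1 : 1 ≤ β ^ 2 := one_le_pow₀ hβ
      have h2 : 1 ≤ p ^ 3 := one_le_pow₀ hp
      nlinarith
    have hV4 : 4 * V ≤ rnl ^ 2 := by nlinarith [mul_le_mul_of_nonneg_left hβp hV0]
    have hdom : evnorm v + evnorm (K.mulVec v) ≤ rnl := by
      apply le_of_sq_le_sq_aux _ hrnl0.le
      nlinarith [sq_nonneg (evnorm v - evnorm (K.mulVec v)), sq_nonneg rnl]
    have hfe := hf v (K.mulVec v) hdom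
    set f := G v (K.mulVec v) - (A.mulVec v + B.mulVec (K.mulVec v)) with hfdef
    have hx : x (s + 1) = M.mulVec v + Real.sqrt γ • f := by
      rw [hstep, hM, Matrix.smul_mulVec, Matrix.add_mulVec, ← Matrix.mulVec_mulVec, ← smul_add, hfdef]
      congr 1
      abel
    have hq0 : 0 ≤ q := le_trans (by positivity) hSv
    have he : evnorm (Real.sqrt γ • f) ≤ β * q := by
      rw [aux_evnorm_smul, abs_of_nonneg (Real.sqrt_nonneg _)]
      have h1 : Real.sqrt γ ≤ 1 := Real.sqrt_le_one.2 hγ.2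
      calc Real.sqrt γ * evnorm f ≤ 1 * evnorm f :=
            mul_le_mul_of_nonneg_right h1 (aux_evnorm_nonneg f)
        _ ≤ β * (evnorm v ^ 2 + evnorm (K.mulVec v) ^ 2) := by linarith
        _ ≤ β * q := by gcongr
    have hePe : Real.sqrt ((Real.sqrt γ • f) ⬝ᵥ P.mulVec (Real.sqrt γ • f)) ≤
        Real.sqrt p * β * q := by
      apply Real.sqrt_le_iff.2 ⟨by positivity, ?_⟩
      refine (aux_quad_le P _).trans ?_
      rw [mul_assoc, mul_pow, Real.sq_sqrt hp0.le]
      have := aux_evnorm_nonneg (Real.sqrt γ • f)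
      gcongr
    rw [hx]
    refine (aux_cs P hPp _ _).trans ?_
    rw [hly v]
    have hVq : V ≤ p * q := by
      refine (aux_quad_le P v).trans ?_
      apply mul_le_mul_of_nonneg_left _ hp0.le
      nlinarith [sq_nonneg (evnorm (K.mulVec v))]
    refine le_trans ?_ (aux_scalar V q p β hp hβ0.le hq0 hqv hVq (by nlinarith))
    gcongr
  induction t with
  | zero => simp
  | succ n ih =>
    have hle : x n ⬝ᵥ P.mulVec (x n) ≤ x 0 ⬝ᵥ P.mulVec (x 0) :=
      ih.trans (mul_le_of_le_one_right (hnn _) (pow_le_one₀ hρ0 hρ1))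
    calc _ ≤ x n ⬝ᵥ P.mulVec (x n) * (1 - 1 / (2 * p)) := step n (hle.trans hV0)
      _ ≤ (x 0 ⬝ᵥ P.mulVec (x 0) * (1 - 1 / (2 * p)) ^ n) * (1 - 1 / (2 * p)) :=
        mul_le_mul_of_nonneg_right ih hρ0
      _ = _ := by rw [pow_succ]; ring
end
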